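/- arXiv:2407.05280 — 3 statements merged into one kernel-verified Lean document; each statement's English description precedes it below -/
import Mathlib

section
/- Let p ≥ 1 and l be natural numbers with 0 < l < 2^p, and let s : ℕ → ℕ be a sequence with s(0) = 2^p + l such that s(i+1) ≤ ⌈s(i)/2⌉ + 1 for every i. Then s(p) ≤ 4. -/
/-- If `p ≥ 1`, `0 < l < 2^p`, `s 0 = 2^p + l`, and `s (i+1) ≤ ⌈s i / 2⌉ + 1` for every `i`,
then `s p ≤ 4`. -/
theorem stmt6 (p l : ℕ) (hp : 1 ≤ p) (hl0 : 0 < l) (hl : l < 2 ^ p)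
    (s : ℕ → ℕ) (h0 : s 0 = 2 ^ p + l)
    (hstep : ∀ i, s (i + 1) ≤ s i ⌈/⌉ 2 + 1) :
    s p ≤ 4 := by
  have key : ∀ i k, i + k = p → s i ≤ 2 * 2 ^ k + 2 := by
    intro i
    induction i with
    | zero =>
      intro k hk
      have hk' : k = p := by omega
      subst hk'
      omega
    | succ i ih =>
      intro k hk
      have h1 := ih (k + 1) (by omega)
      have h2 := hstep i
      rw [Nat.ceilDiv_eq_add_pred_div] at h2
      rw [pow_succ] at h1
      omega
  simpa using key p 0 (by omega)
end

section
/- Let s : ℕ → ℕ be a sequence and t a natural number such that for every i < t, s(i+1) = ⌈s(i)/2⌉ or s(i+1) = s(i) − ⌈s(i)/2⌉ + 1, and such that s(i) ≥ 3 for every i ≤ t. Then t ≤ ⌈log₂ s(0)⌉. -/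
/-- If for every `i < t`, `s (i+1) = ⌈s i / 2⌉` or `s (i+1) = s i - ⌈s i / 2⌉ + 1`, and
`s i ≥ 3` for every `i ≤ t`, then `t ≤ ⌈log₂ (s 0)⌉`. -/
theorem stmt7 (s : ℕ → ℕ) (t : ℕ)
    (hstep : ∀ i < t, s (i + 1) = s i ⌈/⌉ 2 ∨ s (i + 1) = s i - s i ⌈/⌉ 2 + 1)
    (hge : ∀ i ≤ t, 3 ≤ s i) :
    t ≤ Nat.clog 2 (s 0) := by
  have key : ∀ i ≤ t, 2 ^ i * s i + 2 ≤ s 0 + 2 * 2 ^ i := by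
    intro i
    induction i with
    | zero => intro _; omega
    | succ i ih =>
      intro hi
      have h1 := ih (by omega)
      have h2 := hstep i (by omega)
      rw [Nat.ceilDiv_eq_add_pred_div] at h2
      have h3 : 2 * s (i + 1) ≤ s i + 2 := by
        have := hge i (by omega)
        omega
      have h4 := Nat.mul_le_mul_left (2 ^ i) h3
      rw [pow_succ]
      nlinarith
  have h1 := key t le_rfl
  have h2 := Nat.mul_le_mul_left (2 ^ t) (hge t le_rfl)
  have h3 : 2 ^ t ≤ s 0 := by omega
  have h4 : 2 ^ t ≤ 2 ^ Nat.clog 2 (s 0) := h3.trans (Nat.le_pow_clog (by norm_num) _)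
  exact (Nat.pow_le_pow_iff_right (by norm_num)).1 h4
end

section
/- Let s : ℕ → ℕ be a sequence and t a natural number such that for every i < t, s(i+1) = ⌈s(i)/2⌉ or s(i+1) = s(i) − ⌈s(i)/2⌉ + 1, such that s(i) ≥ 3 for every i < t, and such that s(t) = 2. Then t ≤ ⌈log₂ s(0)⌉ + 1. -/
/-- If for every `i < t`, `s (i+1) = ⌈s i / 2⌉` or `s (i+1) = s i - ⌈s i / 2⌉ + 1`,
`s i ≥ 3` for every `i < t`, and `s t = 2`, then `t ≤ ⌈log₂ (s 0)⌉ + 1`. -/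
theorem stmt8 (s : ℕ → ℕ) (t : ℕ)
    (hstep : ∀ i < t, s (i + 1) = s i ⌈/⌉ 2 ∨ s (i + 1) = s i - s i ⌈/⌉ 2 + 1)
    (hge : ∀ i < t, 3 ≤ s i) (ht : s t = 2) :
    t ≤ Nat.clog 2 (s 0) + 1 := by
  rcases t with _ | k
  · omega
  have key : ∀ i, i ≤ k → 2 ^ i * (s i - 2) ≤ s 0 - 2 := by
    intro i
    induction i with
    | zero => intro _; simp
    | succ i ih =>
      intro hi
      have h1 := ih (by omega)
      have h2 := hstep i (by omega)
      have h3 := hge i (by omega)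
      rw [Nat.ceilDiv_eq_add_pred_div] at h2
      have h4 : 2 * (s (i + 1) - 2) ≤ s i - 2 := by omega
      calc 2 ^ (i + 1) * (s (i + 1) - 2) = 2 ^ i * (2 * (s (i + 1) - 2)) := by ring
        _ ≤ 2 ^ i * (s i - 2) := Nat.mul_le_mul_left _ h4
        _ ≤ _ := h1
  have h1 := key k le_rfl
  have h2 := hge k (by omega)
  have h3 : 2 ^ k * 1 ≤ 2 ^ k * (s k - 2) := Nat.mul_le_mul_left _ (by omega)
  have h4 : s 0 ≤ 2 ^ Nat.clog 2 (s 0) := Nat.le_pow_clog (by norm_num) _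
  have h5 : 2 ^ k ≤ 2 ^ Nat.clog 2 (s 0) := by omega
  have h6 := (Nat.pow_le_pow_iff_right (by norm_num : 1 < 2)).1 h5
  omega
end
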